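/- Let p be a prime and G a finite powerful p-group. Then for all i, j ≥ 0 and k ≥ 1, (Ω_i(G^{p^k}))^{p^j} ≤ Ω_{i-j}(G^{p^{k+j}}), where i - j is interpreted as 0 when j ≥ i (so that the right-hand side is trivial in that case). -/

import Mathlib

/-- The subgroup generated by the `n`-th powers of the elements of `H`. -/
def subgroupPow {G : Type*} [Group G] (H : Subgroup G) (n : ℕ) : Subgroup G :=
  Subgroup.closure {x | ∃ h ∈ H, h ^ n = x}

/-- `Ω_i(H)`: the subgroup generated by the elements of `H` whose order divides `p ^ i`. -/
def omegaSubgroup {G : Type*} [Group G] (p i : ℕ) (H : Subgroup G) : Subgroup G :=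
  Subgroup.closure {x | x ∈ H ∧ x ^ p ^ i = 1}

/-- A finite `p`-group `G` is powerful if `[G,G] ≤ G^p` when `p` is odd,
and `[G,G] ≤ G^4` when `p = 2`. -/
def IsPowerful (p : ℕ) (G : Type*) [Group G] : Prop :=
  if p = 2 then commutator G ≤ subgroupPow (⊤ : Subgroup G) 4
  else commutator G ≤ subgroupPow (⊤ : Subgroup G) p

/-- The subgroup of `n`-th powers of the whole group is normal (indeed characteristic). -/
instance subgroupPow_top_normal {G : Type*} [Group G] (n : ℕ) :
    (subgroupPow (⊤ : Subgroup G) n).Normal := by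
  constructor
  intro x hx g
  have key : Subgroup.map (MulAut.conj g).toMonoidHom (subgroupPow (⊤ : Subgroup G) n)
      ≤ subgroupPow (⊤ : Subgroup G) n := by
    rw [subgroupPow, MonoidHom.map_closure]
    apply Subgroup.closure_le _ |>.mpr
    rintro y ⟨z, ⟨h, -, rfl⟩, rfl⟩
    exact Subgroup.subset_closure ⟨(MulAut.conj g) h, trivial, by
      simp [((MulAut.conj g).toMonoidHom.map_pow h n).symm]⟩
  have hmem : (MulAut.conj g) x ∈
      Subgroup.map (MulAut.conj g).toMonoidHom (subgroupPow (⊤ : Subgroup G) n) :=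
    Subgroup.mem_map_of_mem _ hx
  simpa [MulAut.conj_apply] using key hmem

/-- A powerfully central chain `{1} = H 0 ≤ H 1 ≤ ⋯ ≤ H n = G` of length `n`:
`[H (k+1), G] ≤ (H k)^p` for all `k < n`. -/
def IsPowerfullyCentralChain (p : ℕ) {G : Type*} [Group G] (n : ℕ) (H : ℕ → Subgroup G) : Prop :=
  H 0 = ⊥ ∧ H n = ⊤ ∧ (∀ k, k < n → H k ≤ H (k + 1)) ∧
    ∀ k, k < n → ⁅H (k + 1), (⊤ : Subgroup G)⁆ ≤ subgroupPow (H k) p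

/-- A group is powerfully nilpotent if it is powerful and admits a powerfully central chain. -/
def IsPowerfullyNilpotent (p : ℕ) (G : Type*) [Group G] : Prop :=
  IsPowerful p G ∧ ∃ (n : ℕ) (H : ℕ → Subgroup G), IsPowerfullyCentralChain p n H

/-- The powerful nilpotency class: the least possible length of a powerfully central chain. -/
noncomputable def powerfulNilpotencyClass (p : ℕ) (G : Type*) [Group G] : ℕ :=
  sInf {n | ∃ H : ℕ → Subgroup G, IsPowerfullyCentralChain p n H}

/-!
Write `R a` for `iteratedPow G p a`. In a powerful `p`-group `[R a, G] ≤ R (a + 1)`, and even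
`[R a, G] ≤ R (a + 2)` when `p = 2`, so `(x * s) ^ p ≡ x ^ p * s ^ p` modulo `R (a + 2)` whenever
`s ∈ R a`. Successive approximation then shows that every element of `R (a + 1)` is the `p`-th power
of an element of `R a`, and hence that `R k = G^{p^k}`.

The theorem reduces to the fact that `Ω_i(R k)` has exponent dividing `p ^ i` for `k ≥ 1`. This
follows by induction on `i`, factoring out `Ω_1(R 1)`, as soon as the elements of order `p` in `R 1`
commute with one another. A stronger statement is amenable to induction: for `i ≥ 1`, the elements
`w` of order `p` in `R i` commute with all elements `v` of order dividing `p ^ i`. Write `w = q ^ p`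
with `q ∈ R (i - 1)`. Then `w` commutes with `v` once `[v, q]` and `[q, [v, q]]` have order dividing
`p`, because these commutators lie so deep in the chain that the statement is already known for
them. The bound on their orders comes from the quotient by `Ω_1(R (i - 1))` when `i ≥ 2`. When
`i = 1` it is proved by descending induction along the chain.
-/

open scoped commutatorElement

section Subgroups

variable {G G' : Type*} [Group G] [Group G']

theorem pow_mem_subgroupPow {H : Subgroup G} {x : G} (hx : x ∈ H) (n : ℕ) :
    x ^ n ∈ subgroupPow H n :=
  Subgroup.subset_closure ⟨x, hx, rfl⟩

theorem subgroupPow_le_iff {H K : Subgroup G} {n : ℕ} :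
    subgroupPow H n ≤ K ↔ ∀ x ∈ H, x ^ n ∈ K := by
  simp [subgroupPow, Subgroup.closure_le, Set.subset_def]

theorem subgroupPow_le_self (H : Subgroup G) (n : ℕ) : subgroupPow H n ≤ H :=
  subgroupPow_le_iff.2 fun _ hx => H.pow_mem hx n

theorem map_subgroupPow (f : G →* G') (H : Subgroup G) (n : ℕ) :
    (subgroupPow H n).map f = subgroupPow (H.map f) n := by
  apply le_antisymm
  · rw [Subgroup.map_le_iff_le_comap, subgroupPow_le_iff]
    intro x hx
    rw [Subgroup.mem_comap, map_pow]
    exact pow_mem_subgroupPow (Subgroup.mem_map_of_mem f hx) n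
  · rw [subgroupPow_le_iff]
    rintro _ ⟨x, hx, rfl⟩
    exact ⟨x ^ n, pow_mem_subgroupPow hx n, map_pow f x n⟩

instance subgroupPow_normal (H : Subgroup G) [hH : H.Normal] (n : ℕ) :
    (subgroupPow H n).Normal := by
  rw [Subgroup.normal_iff_map_conj_eq] at hH ⊢
  intro g
  rw [map_subgroupPow, hH]

theorem exists_normal_index_eq [Finite G] [Nontrivial G] {p : ℕ} [hp : Fact p.Prime]
    (hG : IsPGroup p G) : ∃ N : Subgroup G, N.Normal ∧ N.index = p := by
  obtain ⟨n, hn, hcard⟩ := hG.nontrivial_iff_card.1 inferInstance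
  have hsucc : p ^ n = p ^ (n - 1) * p := (pow_sub_one_mul hn.ne' p).symm
  obtain ⟨N, hN⟩ := Sylow.exists_subgroup_card_pow_prime p (G := G) (n := n - 1)
    (by rw [hcard, hsucc]; exact dvd_mul_right _ _)
  have hindex : N.index = p := by
    refine Nat.eq_of_mul_eq_mul_left (pow_pos hp.out.pos (n - 1)) ?_
    rw [← hsucc, ← hcard, ← N.card_mul_index, hN]
  refine ⟨N, Subgroup.normal_of_index_eq_minFac_card ?_, hindex⟩
  rw [hindex, hcard, hp.out.pow_minFac hn.ne']

theorem subgroupPow_lt [Finite G] {p : ℕ} [hp : Fact p.Prime] (hG : IsPGroup p G)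
    {H : Subgroup G} (hH : H ≠ ⊥) : subgroupPow H p < H := by
  have : Nontrivial H := (Subgroup.nontrivial_iff_ne_bot H).2 hH
  obtain ⟨N, hN, hindex⟩ := exists_normal_index_eq (hG.to_subgroup H)
  have hle : subgroupPow (⊤ : Subgroup H) p ≤ N :=
    subgroupPow_le_iff.2 fun x _ => hindex ▸ N.pow_index_mem x
  have hlt : N < ⊤ := lt_top_iff_ne_top.2 fun h => by
    rw [h, Subgroup.index_top] at hindex
    exact hp.out.one_lt.ne hindex
  have hmap := Subgroup.map_subtype_lt_map_subtype.2 (hle.trans_lt hlt)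
  rwa [map_subgroupPow, ← MonoidHom.range_eq_map, H.range_subtype] at hmap

theorem mem_omegaSubgroup_iff {p i : ℕ} {H : Subgroup G}
    (hmul : ∀ x ∈ H, ∀ y ∈ H, x ^ p ^ i = 1 → y ^ p ^ i = 1 → (x * y) ^ p ^ i = 1) {x : G} :
    x ∈ omegaSubgroup p i H ↔ x ∈ H ∧ x ^ p ^ i = 1 := by
  refine ⟨fun hx => ?_, fun hx => Subgroup.subset_closure hx⟩
  induction hx using Subgroup.closure_induction with
  | mem _ hx => exact hx
  | one => exact ⟨H.one_mem, one_pow _⟩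
  | mul x y _ _ hx hy => exact ⟨H.mul_mem hx.1 hy.1, hmul x hx.1 y hy.1 hx.2 hy.2⟩
  | inv x _ hx => exact ⟨H.inv_mem hx.1, by rw [inv_pow, hx.2, inv_one]⟩

theorem mem_omegaSubgroup_one_iff {p : ℕ} {H : Subgroup G}
    (hcomm : ∀ x ∈ H, ∀ y ∈ H, x ^ p = 1 → y ^ p = 1 → Commute x y) {x : G} :
    x ∈ omegaSubgroup p 1 H ↔ x ∈ H ∧ x ^ p = 1 := by
  rw [mem_omegaSubgroup_iff, pow_one]
  intro y hy z hz hyp hzp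
  rw [pow_one] at hyp hzp ⊢
  rw [(hcomm y hy z hz hyp hzp).mul_pow, hyp, hzp, one_mul]

instance omegaSubgroup_normal (p i : ℕ) (H : Subgroup G) [hH : H.Normal] :
    (omegaSubgroup p i H).Normal := by
  rw [← Subgroup.normalizer_eq_top_iff, ← top_le_iff]
  refine Subgroup.le_normalizer_closure_iff.2 ?_
  rintro g - x ⟨hx, hxi⟩
  exact Subgroup.subset_closure ⟨hH.conj_mem x hx g, by rw [conj_pow, hxi, mul_one, mul_inv_cancel]⟩

end Subgroups

section Commutators

variable {G : Type*} [Group G]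

theorem commutator_mem_iff_commute {T : Subgroup G} [T.Normal] {x y : G} :
    ⁅x, y⁆ ∈ T ↔ Commute (x : G ⧸ T) (y : G ⧸ T) := by
  rw [← commutatorElement_eq_one_iff_commute, ← QuotientGroup.eq_one_iff]
  rfl

theorem mul_pow_eq_of_commute_commutator {x y : G} (hx : Commute ⁅y, x⁆ x) (hy : Commute ⁅y, x⁆ y)
    (n : ℕ) : (x * y) ^ n = x ^ n * y ^ n * ⁅y, x⁆ ^ n.choose 2 := by
  set e := ⁅y, x⁆ with he
  have hswap (n : ℕ) : y ^ n * x = x * y ^ n * e ^ n := by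
    have hconj : y * x = x * (y * e) := by
      rw [← hy.eq, ← mul_assoc, ← hx.eq, he, commutatorElement_def]
      group
    rw [mul_assoc, ← hy.symm.mul_pow]
    exact SemiconjBy.pow_right hconj.symm n |>.symm
  induction n with
  | zero => simp
  | succ n ih =>
    rw [Nat.choose_succ_succ' n 1, Nat.choose_one_right, pow_succ, ih]
    calc x ^ n * y ^ n * e ^ n.choose 2 * (x * y)
        = x ^ n * (y ^ n * x) * y * e ^ n.choose 2 := by
          rw [mul_assoc, ((hx.mul_right hy).pow_left _).eq]; group
      _ = x ^ n * x * y ^ n * (e ^ n * y) * e ^ n.choose 2 := by rw [hswap]; group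
      _ = x ^ (n + 1) * y ^ (n + 1) * e ^ (n + n.choose 2) := by
          rw [(hy.pow_left n).eq]; group

theorem commute_pow_of_commutator_pow {v q : G} {n : ℕ} (hq : Commute ⁅q, ⁅v, q⁆⁆ q)
    (hc : Commute ⁅q, ⁅v, q⁆⁆ ⁅v, q⁆) (hcn : ⁅v, q⁆ ^ n = 1)
    (hen : ⁅q, ⁅v, q⁆⁆ ^ n.choose 2 = 1) : Commute v (q ^ n) := by
  have hconj : v * q * v⁻¹ = ⁅v, q⁆ * q := by rw [commutatorElement_def]; group
  have hpow : v * q ^ n * v⁻¹ = q ^ n := by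
    rw [← conj_pow, hconj, mul_pow_eq_of_commute_commutator hc hq, hcn, hen, one_mul, mul_one]
  exact mul_inv_eq_iff_eq_mul.1 hpow

theorem pow_choose_two_mem {K : Subgroup G} {p : ℕ} [hp : Fact p.Prime] {x : G} (hxp : x ^ p ∈ K)
    (hx : p = 2 → x ∈ K) : x ^ p.choose 2 ∈ K := by
  by_cases h2 : p = 2
  · exact K.pow_mem (hx h2) _
  · obtain ⟨m, hm⟩ := hp.out.dvd_choose_self two_ne_zero (lt_of_le_of_ne hp.out.two_le (Ne.symm h2))
    rw [hm, pow_mul]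
    exact K.pow_mem hxp m

theorem commutator_top_le_iff_le_upperCentralSeriesStep {A T : Subgroup G} [T.Normal] :
    ⁅A, (⊤ : Subgroup G)⁆ ≤ T ↔ A ≤ T.upperCentralSeriesStep := by
  rw [Subgroup.commutator_le]
  exact ⟨fun h x hx y => h x hx y trivial, fun h x hx y _ => h hx y⟩

theorem le_of_le_sup_commutator [Group.IsNilpotent G] {A T : Subgroup G} [T.Normal]
    (h : A ≤ T ⊔ ⁅A, (⊤ : Subgroup G)⁆) : A ≤ T := by
  have key (k : ℕ) : A ≤ T ⊔ (⊤ : Subgroup G).lowerCentralSeries k := by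
    induction k with
    | zero => simp
    | succ k ih =>
      refine h.trans (sup_le le_sup_left ?_)
      rw [commutator_top_le_iff_le_upperCentralSeriesStep]
      refine ih.trans (sup_le ?_ ?_) <;> rw [← commutator_top_le_iff_le_upperCentralSeriesStep]
      · exact (Subgroup.commutator_le_left T ⊤).trans le_sup_left
      · exact le_sup_right
  obtain ⟨k, hk⟩ := Subgroup.nilpotent_iff_lowerCentralSeries.1 ‹Group.IsNilpotent G›
  simpa [hk] using key k

theorem commutator_mem_commutator_top {A : Subgroup G} {x : G} (hx : x ∈ A) (g : G) :
    ⁅g, x⁆ ∈ ⁅A, (⊤ : Subgroup G)⁆ := by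
  rw [Subgroup.commutator_comm]
  exact Subgroup.commutator_mem_commutator (Subgroup.mem_top g) hx

theorem commutator_subgroupPow_le {H T : Subgroup G} [T.Normal] {n : ℕ}
    (hpow : ∀ q ∈ H, ∀ g : G, ⁅g, q⁆ ^ n ∈ T)
    (hchoose : ∀ q ∈ H, ∀ g : G, ⁅q, ⁅g, q⁆⁆ ^ n.choose 2 ∈ T)
    (hcentral : ∀ q ∈ H, ∀ g : G, ⁅q, ⁅g, q⁆⁆ ∈ T.upperCentralSeriesStep) :
    ⁅subgroupPow H n, (⊤ : Subgroup G)⁆ ≤ T := by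
  rw [commutator_top_le_iff_le_upperCentralSeriesStep, subgroupPow_le_iff]
  intro q hq g
  have hcomm (y : G) : Commute ⁅(q : G ⧸ T), ⁅(g : G ⧸ T), (q : G ⧸ T)⁆⁆ (y : G ⧸ T) :=
    commutator_mem_iff_commute.1 (hcentral q hq g y)
  rw [commutator_mem_iff_commute]
  exact (commute_pow_of_commutator_pow (hcomm q) (hcomm ⁅g, q⁆)
    ((QuotientGroup.eq_one_iff _).2 (hpow q hq g))
    ((QuotientGroup.eq_one_iff _).2 (hchoose q hq g))).symm

theorem commutator_subgroupPow_le_subgroupPow [Group.IsNilpotent G] {p : ℕ} [Fact p.Prime]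
    {H K : Subgroup G} [H.Normal] [K.Normal] (hHK : ⁅H, (⊤ : Subgroup G)⁆ ≤ K)
    (hK : K ≤ subgroupPow H p) (hK2 : p = 2 → K ≤ subgroupPow (subgroupPow H p) p) :
    ⁅subgroupPow H p, (⊤ : Subgroup G)⁆ ≤ subgroupPow K p := by
  apply le_of_le_sup_commutator
  set C := ⁅subgroupPow H p, (⊤ : Subgroup G)⁆
  set T := subgroupPow K p ⊔ ⁅C, (⊤ : Subgroup G)⁆
  have hCT : C ≤ T.upperCentralSeriesStep :=
    commutator_top_le_iff_le_upperCentralSeriesStep.1 le_sup_right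
  have hTT : T ≤ T.upperCentralSeriesStep :=
    commutator_top_le_iff_le_upperCentralSeriesStep.1 (Subgroup.commutator_le_left T ⊤)
  have hpowT {x : G} (hx : x ∈ K) : x ^ p ∈ T :=
    (le_sup_left : _ ≤ T) (pow_mem_subgroupPow hx p)
  have hcommK {q : G} (hq : q ∈ H) (g : G) : ⁅g, q⁆ ∈ K :=
    hHK (commutator_mem_commutator_top hq g)
  have hT : ⁅subgroupPow (subgroupPow H p) p, (⊤ : Subgroup G)⁆ ≤ T := by
    have hmem {q : G} (hq : q ∈ subgroupPow H p) (g : G) : ⁅q, ⁅g, q⁆⁆ ∈ T :=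
      (le_sup_right : _ ≤ T)
        (commutator_mem_commutator_top (commutator_mem_commutator_top hq g) q)
    exact commutator_subgroupPow_le
      (fun q hq g => hpowT (hcommK (subgroupPow_le_self H p hq) g))
      (fun q hq g => T.pow_mem (hmem hq g) _) (fun q hq g => hTT (hmem hq g))
  refine commutator_subgroupPow_le (fun q hq g => hpowT (hcommK hq g)) (fun q hq g => ?_)
    fun q hq g => hCT (commutator_mem_commutator_top (hK (hcommK hq g)) q)
  have he : ⁅q, ⁅g, q⁆⁆ ∈ K := by
    rw [← commutatorElement_inv]
    exact K.inv_mem (Subgroup.commutator_le_left K ⊤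
      (Subgroup.commutator_mem_commutator (hcommK hq g) (Subgroup.mem_top q)))
  exact pow_choose_two_mem (hpowT he) fun h2 =>
    hT (commutator_mem_commutator_top (hK2 h2 (hcommK hq g)) q)

end Commutators

/-- The exponent `e` in the condition `[G, G] ≤ G^{p^e}` that makes a `p`-group `G` powerful, which
allows `p = 2` and odd `p` to be treated together. -/
def powerfulGap (p : ℕ) : ℕ := if p = 2 then 2 else 1

/-- The chain `G ≥ G^p ≥ (G^p)^p ≥ ⋯` of iterated `p`-th power subgroups, which in a powerful
`p`-group agrees with `G ≥ G^p ≥ G^{p^2} ≥ ⋯`. -/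
def iteratedPow (G : Type*) [Group G] (p : ℕ) : ℕ → Subgroup G
  | 0 => ⊤
  | a + 1 => subgroupPow (iteratedPow G p a) p

theorem one_le_powerfulGap (p : ℕ) : 1 ≤ powerfulGap p := by
  unfold powerfulGap; split_ifs <;> norm_num

theorem isPowerful_iff {p : ℕ} {G : Type*} [Group G] :
    IsPowerful p G ↔ commutator G ≤ subgroupPow (⊤ : Subgroup G) (p ^ powerfulGap p) := by
  unfold IsPowerful powerfulGap
  split_ifs with h <;> simp [h]

theorem IsPowerful.of_surjective {p : ℕ} {G G' : Type*} [Group G] [Group G']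
    (hG : IsPowerful p G) {f : G →* G'} (hf : Function.Surjective f) : IsPowerful p G' := by
  rw [isPowerful_iff] at hG ⊢
  have hmap := Subgroup.map_mono (f := f) hG
  rwa [map_subgroupPow, map_commutator_eq, MonoidHom.range_eq_top.2 hf,
    Subgroup.map_top_of_surjective f hf, ← commutator_def] at hmap

section IteratedPow

variable {G : Type*} [Group G] {p : ℕ}

theorem iteratedPow_antitone : Antitone (iteratedPow G p) :=
  antitone_nat_of_succ_le fun _ => subgroupPow_le_self _ p

instance iteratedPow_normal (a : ℕ) : (iteratedPow G p a).Normal := by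
  induction a with
  | zero => exact inferInstanceAs (⊤ : Subgroup G).Normal
  | succ a ih => exact subgroupPow_normal _ p

theorem pow_mem_iteratedPow_succ {a : ℕ} {x : G} (hx : x ∈ iteratedPow G p a) :
    x ^ p ∈ iteratedPow G p (a + 1) :=
  pow_mem_subgroupPow hx p

theorem pow_mem_iteratedPow {a : ℕ} {x : G} (hx : x ∈ iteratedPow G p a) (j : ℕ) :
    x ^ p ^ j ∈ iteratedPow G p (a + j) := by
  induction j with
  | zero => simpa using hx
  | succ j ih =>
    rw [pow_succ, pow_mul]
    exact pow_mem_iteratedPow_succ ih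

theorem pow_mem_iteratedPow_of_top (x : G) (k : ℕ) : x ^ p ^ k ∈ iteratedPow G p k := by
  have hx : x ∈ iteratedPow G p 0 := Subgroup.mem_top x
  simpa only [zero_add] using pow_mem_iteratedPow hx k

theorem map_iteratedPow {G' : Type*} [Group G'] {f : G →* G'} (hf : Function.Surjective f)
    (a : ℕ) : (iteratedPow G p a).map f = iteratedPow G' p a := by
  induction a with
  | zero => exact Subgroup.map_top_of_surjective f hf
  | succ a ih => rw [iteratedPow, map_subgroupPow, ih, iteratedPow]

theorem mk_mem_iteratedPow {N : Subgroup G} [N.Normal] {a : ℕ} {x : G}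
    (hx : x ∈ iteratedPow G p a) : (x : G ⧸ N) ∈ iteratedPow (G ⧸ N) p a := by
  rw [← map_iteratedPow (QuotientGroup.mk'_surjective N)]
  exact Subgroup.mem_map_of_mem (QuotientGroup.mk' N) hx

theorem exists_iteratedPow_eq_bot [Finite G] [Fact p.Prime] (hG : IsPGroup p G) :
    ∃ n, iteratedPow G p n = ⊥ := by
  obtain ⟨n, hn⟩ := WellFoundedLT.antitone_chain_condition (iteratedPow_antitone (G := G) (p := p))
  by_contra! hne
  exact (subgroupPow_lt hG (hne n)).ne (hn (n + 1) n.le_succ).symm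

theorem commutator_iteratedPow_le [Group.IsNilpotent G] [Fact p.Prime] (hpow : IsPowerful p G)
    (a : ℕ) : ⁅iteratedPow G p a, (⊤ : Subgroup G)⁆ ≤ iteratedPow G p (a + powerfulGap p) := by
  induction a with
  | zero =>
    rw [zero_add]
    exact (isPowerful_iff.1 hpow).trans
      (subgroupPow_le_iff.2 fun x _ => pow_mem_iteratedPow_of_top x _)
  | succ a ih =>
    rw [add_right_comm]
    refine commutator_subgroupPow_le_subgroupPow ih ?_ fun h2 => ?_
    · exact iteratedPow_antitone (Nat.add_le_add_left (one_le_powerfulGap p) a)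
    · rw [powerfulGap, if_pos h2]
      exact le_rfl

theorem commutator_mem_iteratedPow_right [Group.IsNilpotent G] [Fact p.Prime]
    (hpow : IsPowerful p G) {a : ℕ} {x : G} (hx : x ∈ iteratedPow G p a) (g : G) :
    ⁅g, x⁆ ∈ iteratedPow G p (a + powerfulGap p) :=
  commutator_iteratedPow_le hpow a (commutator_mem_commutator_top hx g)

theorem commutator_mem_iteratedPow_left [Group.IsNilpotent G] [Fact p.Prime]
    (hpow : IsPowerful p G) {a : ℕ} {x : G} (hx : x ∈ iteratedPow G p a) (g : G) :
    ⁅x, g⁆ ∈ iteratedPow G p (a + powerfulGap p) := by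
  rw [← commutatorElement_inv]
  exact Subgroup.inv_mem _ (commutator_mem_iteratedPow_right hpow hx g)

theorem mk_mul_pow_iteratedPow [Group.IsNilpotent G] [Fact p.Prime] (hpow : IsPowerful p G)
    {b : ℕ} (x : G) {s : G} (hs : s ∈ iteratedPow G p b) :
    (↑((x * s) ^ p) : G ⧸ iteratedPow G p (b + 2)) = ↑(x ^ p * s ^ p) := by
  have hgap := one_le_powerfulGap p
  have he := commutator_mem_iteratedPow_left hpow hs x
  set T := iteratedPow G p (b + 2)
  have hcomm (y : G) : Commute ⁅(s : G ⧸ T), (x : G ⧸ T)⁆ (y : G ⧸ T) := by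
    have hmem := commutator_mem_iteratedPow_right hpow he y
    exact (commutator_mem_iff_commute.1 (iteratedPow_antitone (by omega) hmem)).symm
  have hchoose : ⁅(s : G ⧸ T), (x : G ⧸ T)⁆ ^ p.choose 2 = 1 := by
    refine (QuotientGroup.eq_one_iff (⁅s, x⁆ ^ p.choose 2)).2 (pow_choose_two_mem ?_ fun h2 => ?_)
    · exact iteratedPow_antitone (by omega) (pow_mem_iteratedPow_succ he)
    · rwa [powerfulGap, if_pos h2] at he
  have hformula := mul_pow_eq_of_commute_commutator (hcomm x) (hcomm s) p
  rwa [hchoose, mul_one] at hformula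

theorem exists_mk_pow_eq [Group.IsNilpotent G] [Fact p.Prime] (hpow : IsPowerful p G)
    {b : ℕ} {t : G} (ht : t ∈ iteratedPow G p (b + 1)) :
    ∃ s ∈ iteratedPow G p b, (↑(s ^ p) : G ⧸ iteratedPow G p (b + 2)) = ↑t := by
  induction ht using Subgroup.closure_induction with
  | mem x hx =>
    obtain ⟨s, hs, rfl⟩ := hx
    exact ⟨s, hs, rfl⟩
  | one => exact ⟨1, Subgroup.one_mem _, by rw [one_pow]⟩
  | mul x y _ _ ihx ihy =>
    obtain ⟨s, hs, hsx⟩ := ihx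
    obtain ⟨r, hr, hry⟩ := ihy
    refine ⟨s * r, Subgroup.mul_mem _ hs hr, ?_⟩
    rw [mk_mul_pow_iteratedPow hpow s hr, QuotientGroup.mk_mul, hsx, hry, QuotientGroup.mk_mul]
  | inv x _ ih =>
    obtain ⟨s, hs, hsx⟩ := ih
    refine ⟨s⁻¹, Subgroup.inv_mem _ hs, ?_⟩
    rw [inv_pow, QuotientGroup.mk_inv, hsx, QuotientGroup.mk_inv]

/-- Successive approximation: replacing `x` by `x * s` with `s` in the `(a + b)`-th layer improves
the congruence `x ^ p ≡ z` by one layer. -/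
theorem exists_inv_pow_mul_mem [Group.IsNilpotent G] [Fact p.Prime] (hpow : IsPowerful p G)
    {a : ℕ} {z : G} (hz : z ∈ iteratedPow G p (a + 1)) (b : ℕ) :
    ∃ x ∈ iteratedPow G p a, (x ^ p)⁻¹ * z ∈ iteratedPow G p (a + b + 1) := by
  induction b with
  | zero => exact ⟨1, Subgroup.one_mem _, by simpa using hz⟩
  | succ b ih =>
    obtain ⟨x, hx, hxz⟩ := ih
    obtain ⟨s, hs, hsz⟩ := exists_mk_pow_eq hpow hxz
    refine ⟨x * s, Subgroup.mul_mem _ hx (iteratedPow_antitone (Nat.le_add_right a b) hs), ?_⟩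
    refine QuotientGroup.eq.1 ((mk_mul_pow_iteratedPow hpow x hs).trans ?_)
    rw [QuotientGroup.mk_mul, hsz, ← QuotientGroup.mk_mul, mul_inv_cancel_left]
    rfl

theorem exists_pow_eq_of_mem_iteratedPow_succ [Finite G] [Fact p.Prime]
    (hG : IsPGroup p G) (hpow : IsPowerful p G) {a : ℕ} {z : G}
    (hz : z ∈ iteratedPow G p (a + 1)) : ∃ y ∈ iteratedPow G p a, y ^ p = z := by
  have := hG.isNilpotent
  obtain ⟨n, hn⟩ := exists_iteratedPow_eq_bot hG
  obtain ⟨y, hy, hyz⟩ := exists_inv_pow_mul_mem hpow hz n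
  have hmem := iteratedPow_antitone (by omega : n ≤ a + n + 1) hyz
  rw [hn, Subgroup.mem_bot, inv_mul_eq_one] at hmem
  exact ⟨y, hy, hmem⟩

theorem subgroupPow_top_eq_iteratedPow [Finite G] [Fact p.Prime] (hG : IsPGroup p G)
    (hpow : IsPowerful p G) (k : ℕ) : subgroupPow (⊤ : Subgroup G) (p ^ k) = iteratedPow G p k := by
  refine le_antisymm (subgroupPow_le_iff.2 fun x _ => pow_mem_iteratedPow_of_top x k)
    fun x hx => ?_
  suffices ∃ y, y ^ p ^ k = x by
    obtain ⟨y, rfl⟩ := this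
    exact pow_mem_subgroupPow (Subgroup.mem_top y) _
  induction k generalizing x with
  | zero => exact ⟨x, by rw [pow_zero, pow_one]⟩
  | succ k ih =>
    obtain ⟨z, hz, rfl⟩ := exists_pow_eq_of_mem_iteratedPow_succ hG hpow hx
    obtain ⟨y, rfl⟩ := ih z hz
    exact ⟨y, by rw [pow_succ, pow_mul]⟩

end IteratedPow

/-- `TorsionCommutes G p i`: the elements of order dividing `p` in the `i`-th iterated power
subgroup centralise the elements of order dividing `p ^ i`. For `i ≥ 1` this holds in every finite
powerful `p`-group (`torsionCommutes`). -/
def TorsionCommutes (G : Type*) [Group G] (p i : ℕ) : Prop :=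
  ∀ w ∈ iteratedPow G p i, ∀ v : G, w ^ p = 1 → v ^ p ^ i = 1 → Commute w v

section TorsionCommutes

variable {G : Type*} [Group G] {p : ℕ}

theorem pow_pow_eq_one_of_pow_eq_one {x : G} {i : ℕ} (hi : i ≠ 0) (hx : x ^ p = 1) :
    x ^ p ^ i = 1 := by
  obtain ⟨m, hm⟩ := dvd_pow_self p hi
  rw [hm, pow_mul, hx, one_pow]

variable [Fact p.Prime]

theorem TorsionCommutes.commute_pow [Group.IsNilpotent G] (hpow : IsPowerful p G) {a : ℕ}
    (hB : TorsionCommutes G p (a + 2)) {v q : G} (hq : (q ^ p) ^ p = 1)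
    (hcmem : ⁅v, q⁆ ∈ iteratedPow G p (a + powerfulGap p)) (hcp : ⁅v, q⁆ ^ p = 1)
    (hep : ⁅q, ⁅v, q⁆⁆ ^ p = 1) : Commute v (q ^ p) := by
  have hgap := one_le_powerfulGap p
  have hqa : q ^ p ^ (a + 2) = 1 := by
    rw [pow_succ', pow_mul, pow_pow_eq_one_of_pow_eq_one a.succ_ne_zero hq]
  have hemem : ⁅q, ⁅v, q⁆⁆ ∈ iteratedPow G p (a + 2) :=
    iteratedPow_antitone (by omega) (commutator_mem_iteratedPow_right hpow hcmem q)
  refine commute_pow_of_commutator_pow (hB _ hemem _ hep hqa)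
    (hB _ hemem _ hep (pow_pow_eq_one_of_pow_eq_one (by omega) hcp)) hcp ?_
  refine Subgroup.mem_bot.1 (pow_choose_two_mem (Subgroup.mem_bot.2 hep) fun h2 => ?_)
  rw [powerfulGap, if_pos h2] at hcmem
  exact Subgroup.mem_bot.2 (commutatorElement_eq_one_iff_commute.2 (hB _ hcmem q hcp hqa).symm)

theorem TorsionCommutes.commutator_pow_eq_one_of_ne_two [Group.IsNilpotent G]
    (hpow : IsPowerful p G) (h2 : p ≠ 2) {a b : ℕ} (hB : TorsionCommutes G p (a + 2)) {v q : G}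
    (hv : v ∈ iteratedPow G p a) (hvp : v ^ p = 1) (hq : q ∈ iteratedPow G p b)
    (hdeep : ∀ r ∈ iteratedPow G p (b + 1), ⁅v, r⁆ ^ p = 1) : ⁅v, q⁆ ^ p = 1 := by
  -- `⁅v, q⁆` is a product of two elements of order `p` whose commutator commutes with both.
  have hgap := one_le_powerfulGap p
  set c := ⁅v, q⁆ with hc
  set u := q * v⁻¹ * q⁻¹ with hu
  have hcu : c = v * u := by rw [hc, hu, commutatorElement_def]; group
  have hup : u ^ p = 1 := by rw [hu, conj_pow, inv_pow, hvp]; group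
  have hcb : c ∈ iteratedPow G p (b + 1) :=
    iteratedPow_antitone (by omega) (commutator_mem_iteratedPow_right hpow hq v)
  have hca : c ∈ iteratedPow G p (a + 1) :=
    iteratedPow_antitone (by omega) (commutator_mem_iteratedPow_left hpow hv q)
  have he : ⁅u, v⁆ = v⁻¹ * ⁅c, v⁆ * v⁻¹⁻¹ := by
    simp only [hcu, commutatorElement_def]; group
  have hemem : ⁅u, v⁆ ∈ iteratedPow G p (a + 2) := by
    rw [he]
    refine Subgroup.Normal.conj_mem inferInstance _ ?_ _
    exact iteratedPow_antitone (by omega) (commutator_mem_iteratedPow_left hpow hca v)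
  have hep : ⁅u, v⁆ ^ p = 1 := by
    rw [he, conj_pow, ← commutatorElement_inv, inv_pow, hdeep c hcb]; group
  have hcomm {x : G} (hx : x ^ p = 1) : Commute ⁅u, v⁆ x :=
    hB _ hemem x hep (pow_pow_eq_one_of_pow_eq_one (by omega) hx)
  have hchoose : ⁅u, v⁆ ^ p.choose 2 = 1 := Subgroup.mem_bot.1
    (pow_choose_two_mem (Subgroup.mem_bot.2 hep) fun h => absurd h h2)
  rw [hcu, mul_pow_eq_of_commute_commutator (hcomm hvp) (hcomm hup), hvp, hup, hchoose, one_mul,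
    one_mul]

theorem conj_commutator_eq_inv {v : G} (hv : v ^ 2 = 1) (q : G) : v * ⁅v, q⁆ * v⁻¹ = ⁅v, q⁆⁻¹ := by
  have hinv : v⁻¹ = v := inv_eq_of_mul_eq_one_left (by rw [← sq, hv])
  calc v * ⁅v, q⁆ * v⁻¹ = v ^ 2 * q * v⁻¹ * (q⁻¹ * v⁻¹) := by
        rw [commutatorElement_def, sq]; group
    _ = q * v * (q⁻¹ * v⁻¹) := by rw [hv, hinv, one_mul]
    _ = ⁅v, q⁆⁻¹ := by rw [commutatorElement_inv, commutatorElement_def]; group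

theorem TorsionCommutes.commutator_sq_eq_one [Finite G] (hG : IsPGroup 2 G) (hpow : IsPowerful 2 G)
    {a b : ℕ} (hB : TorsionCommutes G 2 (a + 3)) {v q : G} (hv : v ∈ iteratedPow G 2 a)
    (hv2 : v ^ 2 = 1) (hq : q ∈ iteratedPow G 2 b)
    (hdeep : ∀ r ∈ iteratedPow G 2 (b + 1), ⁅v, r⁆ ^ 2 = 1) : ⁅v, q⁆ ^ 2 = 1 := by
  -- `v` inverts `c = ⁅v, q⁆`, so `c ^ 2 = 1` as soon as `v` commutes with `c`, which is a square.
  have := hG.isNilpotent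
  set c := ⁅v, q⁆
  have hinv : v * c * v⁻¹ = c⁻¹ := conj_commutator_eq_inv hv2 q
  have hcmem : c ∈ iteratedPow G 2 (max a b + 1 + 1) := by
    rcases le_total a b with h | h
    · rw [max_eq_right h]
      exact commutator_mem_iteratedPow_right hpow hq v
    · rw [max_eq_left h]
      exact commutator_mem_iteratedPow_left hpow hv q
  have hc4 : (c ^ 2) ^ 2 = 1 := by
    have hvc : ⁅v, c⁆ = (c ^ 2)⁻¹ := by rw [commutatorElement_def, hinv]; group
    have := hdeep c (iteratedPow_antitone (by omega) hcmem)
    rwa [hvc, inv_pow, inv_eq_one] at this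
  obtain ⟨s, hs, hsc⟩ := exists_pow_eq_of_mem_iteratedPow_succ hG hpow hcmem
  have hs8 : s ^ 2 ^ (a + 3) = 1 := by
    rw [pow_succ', pow_mul, hsc, pow_succ', pow_mul,
      pow_pow_eq_one_of_pow_eq_one a.succ_ne_zero hc4]
  have hgp : ⁅v, s⁆ ^ 2 = 1 := hdeep s (iteratedPow_antitone (by omega) hs)
  have hgmem : ⁅v, s⁆ ∈ iteratedPow G 2 (a + 1 + 2) :=
    commutator_mem_iteratedPow_right hpow (iteratedPow_antitone (by omega) hs) v
  have hsg : ⁅s, ⁅v, s⁆⁆ = 1 := commutatorElement_eq_one_iff_commute.2 (hB _ hgmem s hgp hs8).symm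
  have hvc : Commute v (s ^ 2) := by
    apply commute_pow_of_commutator_pow <;> simp [hsg, hgp]
  rw [hsc] at hvc
  rw [sq, mul_eq_one_iff_eq_inv, ← hinv, hvc.eq, mul_inv_cancel_right]

variable [Finite G]

theorem commutator_pow_eq_one_of_torsionCommutes (hG : IsPGroup p G) (hpow : IsPowerful p G) {a : ℕ}
    (hB : ∀ i, a + 2 ≤ i → TorsionCommutes G p i) {v : G} (hv : v ∈ iteratedPow G p a)
    (hvp : v ^ p = 1) (q : G) : ⁅v, q⁆ ^ p = 1 := by
  have := hG.isNilpotent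
  obtain ⟨n, hn⟩ := exists_iteratedPow_eq_bot hG
  suffices hdeep : ∀ m b, n ≤ b + m → ∀ q ∈ iteratedPow G p b, ⁅v, q⁆ ^ p = 1 from
    hdeep n 0 (by omega) q (Subgroup.mem_top q)
  intro m
  induction m with
  | zero =>
    intro b hb q hq
    have hq1 := iteratedPow_antitone hb hq
    rw [hn, Subgroup.mem_bot] at hq1
    rw [hq1, commutatorElement_one_right, one_pow]
  | succ m ih =>
    intro b hb q hq
    by_cases h2 : p = 2
    · subst h2
      exact (hB _ (by omega)).commutator_sq_eq_one hG hpow hv hvp hq (ih _ (by omega))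
    · exact (hB _ le_rfl).commutator_pow_eq_one_of_ne_two hpow h2 hv hvp hq (ih _ (by omega))

theorem commute_of_torsionCommutes (hG : IsPGroup p G) (hpow : IsPowerful p G) {a : ℕ}
    (hB : ∀ i, a + 2 ≤ i → TorsionCommutes G p i) {v w : G} (hv : v ∈ iteratedPow G p a)
    (hvp : v ^ p = 1) (hw : w ∈ iteratedPow G p 1) (hwp : w ^ p = 1) : Commute v w := by
  have := hG.isNilpotent
  obtain ⟨q, -, rfl⟩ := exists_pow_eq_of_mem_iteratedPow_succ hG hpow hw
  have hcmem := commutator_mem_iteratedPow_left hpow hv q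
  have hcp := commutator_pow_eq_one_of_torsionCommutes hG hpow hB hv hvp q
  have hca : ⁅v, q⁆ ∈ iteratedPow G p a := iteratedPow_antitone (by omega) hcmem
  have hep : ⁅q, ⁅v, q⁆⁆ ^ p = 1 := by
    rw [← commutatorElement_inv, inv_pow,
      commutator_pow_eq_one_of_torsionCommutes hG hpow hB hca hcp, inv_one]
  exact (hB _ le_rfl).commute_pow hpow hwp hcmem hcp hep

theorem TorsionCommutes.of_quotient (hG : IsPGroup p G) (hpow : IsPowerful p G) {k : ℕ}
    (hB : TorsionCommutes G p (k + 2))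
    (hN : ∀ x ∈ omegaSubgroup p 1 (iteratedPow G p k), x ^ p = 1)
    (hquot : TorsionCommutes (G ⧸ omegaSubgroup p 1 (iteratedPow G p k)) p k) :
    TorsionCommutes G p (k + 1) := by
  have := hG.isNilpotent
  intro w hw v hwp hvp
  set N := omegaSubgroup p 1 (iteratedPow G p k)
  obtain ⟨q, hq, rfl⟩ := exists_pow_eq_of_mem_iteratedPow_succ hG hpow hw
  have hmemN {x : G} (hx : x ∈ iteratedPow G p k) (hxp : x ^ p = 1) : x ∈ N :=
    Subgroup.subset_closure ⟨hx, by rwa [pow_one]⟩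
  have hqN : q ^ p ∈ N := hmemN (Subgroup.pow_mem _ hq p) hwp
  have hvN : v ^ p ^ k ∈ N :=
    hmemN (pow_mem_iteratedPow_of_top v k) (by rw [← pow_mul, ← pow_succ, hvp])
  have hcN : ⁅v, q⁆ ∈ N := by
    refine commutator_mem_iff_commute.2 (hquot q (mk_mem_iteratedPow hq) v ?_ ?_).symm
    · exact (QuotientGroup.eq_one_iff _).2 hqN
    · exact (QuotientGroup.eq_one_iff _).2 hvN
  have heN : ⁅q, ⁅v, q⁆⁆ ∈ N :=
    Subgroup.commutator_le_left N ⊤ (commutator_mem_commutator_top hcN q)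
  exact (hB.commute_pow hpow hwp (commutator_mem_iteratedPow_right hpow hq v) (hN _ hcN)
    (hN _ heN)).symm

theorem torsionCommutes_succ_of_quotients (hG : IsPGroup p G) (hpow : IsPowerful p G) {k : ℕ}
    (hB : ∀ i, k + 2 ≤ i → TorsionCommutes G p i)
    (hquot : ∀ (N : Subgroup G) [N.Normal], N ≠ ⊥ → ∀ i, 1 ≤ i → TorsionCommutes (G ⧸ N) p i) :
    TorsionCommutes G p (k + 1) := by
  rcases Nat.eq_zero_or_pos k with rfl | hk
  · intro w hw v hwp hvp
    rw [zero_add, pow_one] at hvp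
    exact (commute_of_torsionCommutes hG hpow hB (Subgroup.mem_top v) hvp hw hwp).symm
  have hN {x : G} := mem_omegaSubgroup_one_iff (x := x) fun x hx y hy hxp hyp =>
    commute_of_torsionCommutes hG hpow hB hx hxp (iteratedPow_antitone hk hy) hyp
  by_cases hbot : omegaSubgroup p 1 (iteratedPow G p k) = ⊥
  · intro w hw v hwp _
    have hwN := hN.2 ⟨iteratedPow_antitone k.le_succ hw, hwp⟩
    rw [hbot, Subgroup.mem_bot] at hwN
    exact hwN ▸ Commute.one_left v
  · exact .of_quotient hG hpow (hB _ le_rfl) (fun x hx => (hN.1 hx).2) (hquot _ hbot k hk)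

theorem torsionCommutes (hG : IsPGroup p G) (hpow : IsPowerful p G) {i : ℕ} (hi : 1 ≤ i) :
    TorsionCommutes G p i := by
  induction hcard : Nat.card G using Nat.strong_induction_on generalizing G i with
  | h c ih =>
  obtain ⟨n, hn⟩ := exists_iteratedPow_eq_bot hG
  suffices hdeep : ∀ m i, 1 ≤ i → n ≤ i + m → TorsionCommutes G p i from hdeep n i hi (by omega)
  intro m
  induction m with
  | zero =>
    intro i _ hni w hw v _ _
    have hw1 := iteratedPow_antitone hni hw
    rw [hn, Subgroup.mem_bot] at hw1
    exact hw1 ▸ Commute.one_left v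
  | succ m ihm =>
    intro i hi him
    obtain ⟨k, rfl⟩ := Nat.exists_eq_add_of_le' hi
    refine torsionCommutes_succ_of_quotients hG hpow (fun j hj => ihm j (by omega) (by omega)) ?_
    intro N _ hN j hj
    refine ih _ ?_ (hG.to_quotient N) (hpow.of_surjective (QuotientGroup.mk'_surjective N)) hj rfl
    rw [← hcard, ← N.card_mul_index]
    exact lt_mul_of_one_lt_left (Nat.pos_of_ne_zero N.index_ne_zero_of_finite)
      ((Subgroup.one_lt_card_iff_ne_bot N).2 hN)

theorem mul_pow_eq_one_of_mem_iteratedPow_one (hG : IsPGroup p G) (hpow : IsPowerful p G)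
    {x y : G} {i : ℕ} (hx : x ∈ iteratedPow G p 1) (hy : y ∈ iteratedPow G p 1)
    (hxi : x ^ p ^ i = 1) (hyi : y ^ p ^ i = 1) : (x * y) ^ p ^ i = 1 := by
  induction i generalizing G with
  | zero =>
    rw [pow_zero, pow_one] at *
    rw [hxi, hyi, one_mul]
  | succ i ih =>
    set N := omegaSubgroup p 1 (iteratedPow G p 1)
    have hN {z : G} : z ∈ N ↔ z ∈ iteratedPow G p 1 ∧ z ^ p = 1 :=
      mem_omegaSubgroup_one_iff fun z hz t _ hzp htp =>
        torsionCommutes hG hpow le_rfl z hz t hzp (by rwa [pow_one])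
    have hpowN {z : G} (hz : z ∈ iteratedPow G p 1) (hzi : z ^ p ^ (i + 1) = 1) :
        (z : G ⧸ N) ^ p ^ i = 1 :=
      (QuotientGroup.eq_one_iff (z ^ p ^ i)).2
        (hN.2 ⟨Subgroup.pow_mem _ hz _, by rw [← pow_mul, ← pow_succ, hzi]⟩)
    have hxy : (x * y) ^ p ^ i ∈ N := (QuotientGroup.eq_one_iff _).1
      (ih (hG.to_quotient N) (hpow.of_surjective (QuotientGroup.mk'_surjective N))
        (mk_mem_iteratedPow hx) (mk_mem_iteratedPow hy) (hpowN hx hxi) (hpowN hy hyi))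
    rw [pow_succ, pow_mul, (hN.1 hxy).2]

end TorsionCommutes

theorem omega_statement_2 (p : ℕ) (hp : p.Prime) (G : Type*) [Group G] [Finite G]
    (hG : IsPGroup p G) (hpow : IsPowerful p G) (i j k : ℕ) (hk : 1 ≤ k) :
    subgroupPow (omegaSubgroup p i (subgroupPow (⊤ : Subgroup G) (p ^ k))) (p ^ j) ≤
      omegaSubgroup p (i - j) (subgroupPow (⊤ : Subgroup G) (p ^ (k + j))) := by
  have : Fact p.Prime := ⟨hp⟩
  rw [subgroupPow_top_eq_iteratedPow hG hpow, subgroupPow_top_eq_iteratedPow hG hpow,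
    subgroupPow_le_iff]
  have hk1 : iteratedPow G p k ≤ iteratedPow G p 1 := iteratedPow_antitone hk
  intro x hx
  obtain ⟨hxk, hxi⟩ := (mem_omegaSubgroup_iff fun y hy z hz =>
    mul_pow_eq_one_of_mem_iteratedPow_one hG hpow (hk1 hy) (hk1 hz)).1 hx
  obtain ⟨m, hm⟩ := pow_dvd_pow p (show i ≤ j + (i - j) by omega)
  have hxij : (x ^ p ^ j) ^ p ^ (i - j) = 1 := by
    rw [← pow_mul, ← pow_add, hm, pow_mul, hxi, one_pow]
  exact Subgroup.subset_closure ⟨pow_mem_iteratedPow hxk j, hxij⟩
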